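/- Let T be a rooted tree on the vertex set of a flow graph G that has the parent property, together with a low-high order on G. Let b, r : V \ {s} → V be functions such that for every v ≠ s: (b(v), v) ∈ A with b(v) < v in the low-high order, and (r(v), v) ∈ A with either r(v) = t(v), or r(v) > v in the low-high order and r(v) not a descendant of v in T. Let B and R be the directed graphs on V with arc sets {(b(v), v) : v ≠ s} and {(r(v), v) : v ≠ s}, respectively. Then B and R are strongly independent spanning trees of G rooted at s. -/

import Mathlib

variable {V : Type*}

/-- `IsWalk A u v p`: `p` is a path from `u` to `v` in the digraph with arc
relation `A`, listing all of its vertices in order. -/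
def IsWalk (A : V → V → Prop) (u v : V) (p : List V) : Prop :=
  p.Chain' A ∧ p.head? = some u ∧ p.getLast? = some v

/-- A flow graph: a directed graph with arc relation `A` and start vertex `s`
such that every vertex is reachable from `s` and no arc enters `s`. -/
structure FlowGraph (V : Type*) where
  A : V → V → Prop
  s : V
  reach : ∀ v : V, ∃ p : List V, IsWalk A s v p
  no_enter : ∀ v : V, ¬ A v s

/-- `DomOn A s v w`: `v` lies on every path from `s` to `w` in the digraph with
arc relation `A`. -/
def DomOn (A : V → V → Prop) (s v w : V) : Prop :=
  ∀ p : List V, IsWalk A s w p → v ∈ p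

/-- `v` dominates `w` in the flow graph `G`. -/
def FlowGraph.Dom (G : FlowGraph V) (v w : V) : Prop :=
  DomOn G.A G.s v w

/-- A rooted tree on vertex set `V`, given by a parent function: the root is a
fixed point of the parent function, and iterating the parent function from any
vertex eventually reaches the root. -/
structure ParentTree (V : Type*) where
  parent : V → V
  root : V
  parent_root : parent root = root
  reaches_root : ∀ v : V, ∃ n : ℕ, parent^[n] v = root

/-- `T.Anc x y`: `x` is an ancestor of `y` in the rooted tree `T` (every vertex
is an ancestor of itself). -/
def ParentTree.Anc (T : ParentTree V) (x y : V) : Prop :=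
  ∃ n : ℕ, T.parent^[n] y = x

/-- `T` has the parent property with respect to `G`: for every arc `(v, w)`,
the parent of `w` is an ancestor of `v` in `T`. -/
def ParentProperty (G : FlowGraph V) (T : ParentTree V) : Prop :=
  ∀ v w : V, G.A v w → T.Anc (T.parent w) v

/-- The sibling property with respect to an arbitrary arc relation `A` with
start vertex `s`: no non-root vertex dominates a distinct vertex with the same
parent. -/
def SiblingPropertyOn (A : V → V → Prop) (s : V) (T : ParentTree V) : Prop :=
  ∀ v w : V, v ≠ T.root → w ≠ T.root → v ≠ w → T.parent v = T.parent w →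
    ¬ DomOn A s v w

/-- `T` has the sibling property with respect to the flow graph `G`. -/
def SiblingProperty (G : FlowGraph V) (T : ParentTree V) : Prop :=
  SiblingPropertyOn G.A G.s T

/-- `T` is the dominator tree of the digraph with arc relation `A` and start
vertex `s`: `T` is rooted at `s`, and the parent of every vertex `v ≠ s` is its
immediate dominator, i.e. a strict dominator of `v` that is dominated by every
strict dominator of `v`. -/
def IsDomTreeOn (A : V → V → Prop) (s : V) (T : ParentTree V) : Prop :=
  T.root = s ∧ ∀ v : V, v ≠ s →
    DomOn A s (T.parent v) v ∧ T.parent v ≠ v ∧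
    ∀ u : V, DomOn A s u v → u ≠ v → DomOn A s u (T.parent v)

/-- `T` is the dominator tree of the flow graph `G`. -/
def IsDomTree (G : FlowGraph V) (T : ParentTree V) : Prop :=
  IsDomTreeOn G.A G.s T

/-- `ord` is (the numbering of) a preorder of the rooted tree `T`: an injective
numbering of the vertices such that for every vertex `v` the descendants of `v`
are ordered consecutively, with `v` first. -/
def IsTreePreorder (T : ParentTree V) (ord : V → ℕ) : Prop :=
  Function.Injective ord ∧
  (∀ v x : V, T.Anc v x → ord v ≤ ord x) ∧
  (∀ v x y z : V, T.Anc v x → T.Anc v z → ord x ≤ ord y → ord y ≤ ord z →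
    T.Anc v y)

/-- A preorder `ord` of `T` is low-high on the digraph with arc relation `A`
and start vertex `s`: for every `v ≠ s`, either `(t(v), v)` is an arc, or there
are arcs `(u, v)` and `(w, v)` with `u < v < w` in the order and `w` not a
descendant of `v` in `T`. -/
def LowHighOn (A : V → V → Prop) (s : V) (T : ParentTree V) (ord : V → ℕ) :
    Prop :=
  IsTreePreorder T ord ∧
  ∀ v : V, v ≠ s → (A (T.parent v) v ∨
    ∃ u w : V, A u v ∧ A w v ∧ ord u < ord v ∧ ord v < ord w ∧ ¬ T.Anc v w)

/-- A low-high order of `T` on the flow graph `G`. -/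
def LowHigh (G : FlowGraph V) (T : ParentTree V) (ord : V → ℕ) : Prop :=
  LowHighOn G.A G.s T ord

/-- `B` is (the arc relation of) a spanning tree of `G` rooted at `s`: a
subgraph of `G` in which no arc enters `s`, every vertex other than `s` has
exactly one entering arc, and every vertex is reachable from `s`. -/
def IsSpanningTree (G : FlowGraph V) (B : V → V → Prop) : Prop :=
  (∀ u v : V, B u v → G.A u v) ∧
  (∀ v : V, ¬ B v G.s) ∧
  (∀ v : V, v ≠ G.s → ∃! u : V, B u v) ∧
  (∀ v : V, ∃ p : List V, IsWalk B G.s v p)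

/-- Spanning trees `B` and `R` of `G` rooted at `s` are independent: for every
vertex `v`, the paths from `s` to `v` in `B` and in `R` have in common only
dominators of `v`. -/
def Independent (G : FlowGraph V) (B R : V → V → Prop) : Prop :=
  ∀ v : V, ∀ p q : List V, IsWalk B G.s v p → IsWalk R G.s v q →
    ∀ x : V, x ∈ p → x ∈ q → G.Dom x v

/-- Spanning trees `B` and `R` of `G` rooted at `s` are strongly independent:
for every pair of vertices `v`, `w`, either the path from `s` to `v` in `B` and
the path from `s` to `w` in `R` have in common only common dominators of `v`
and `w`, or the same holds with the roles of `B` and `R` exchanged. -/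
def StronglyIndependent (G : FlowGraph V) (B R : V → V → Prop) : Prop :=
  ∀ v w : V,
    (∀ p q : List V, IsWalk B G.s v p → IsWalk R G.s w q →
      ∀ x : V, x ∈ p → x ∈ q → G.Dom x v ∧ G.Dom x w) ∨
    (∀ p q : List V, IsWalk R G.s v p → IsWalk B G.s w q →
      ∀ x : V, x ∈ p → x ∈ q → G.Dom x v ∧ G.Dom x w)

/-- `IsDerivedArcOf G T v b a`: `(a, b)` is the derived arc of the arc `(v, b)`
of `G` with respect to `T`: `b` is not an ancestor of `v` in `T`, and `a = v`
if `v` is the parent of `b`, while otherwise `a` is the sibling of `b` in `T`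
that is an ancestor of `v`. -/
def IsDerivedArcOf (G : FlowGraph V) (T : ParentTree V) (v b a : V) : Prop :=
  G.A v b ∧ ¬ T.Anc b v ∧
    ((v = T.parent b ∧ a = v) ∨
     (v ≠ T.parent b ∧ a ≠ T.root ∧ T.parent a = T.parent b ∧ T.Anc a v))

/-- The arc relation of the derived graph of `G` with respect to `T`. -/
def DerivedArc (G : FlowGraph V) (T : ParentTree V) (a b : V) : Prop :=
  ∃ v : V, IsDerivedArcOf G T v b a

/-- `S` is the vertex set of a strongly connected subgraph of the digraph with
arc relation `A`. -/
def StronglyConnectedSet (A : V → V → Prop) (S : Set V) : Prop :=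
  S.Nonempty ∧ ∀ u ∈ S, ∀ v ∈ S, ∃ p : List V,
    IsWalk A u v p ∧ ∀ x ∈ p, x ∈ S

/-- `G` is reducible: every strongly connected subgraph has a single entry
vertex, i.e. a vertex of the subgraph contained in every path from `s` to a
vertex of the subgraph. -/
def Reducible (G : FlowGraph V) : Prop :=
  ∀ S : Set V, StronglyConnectedSet G.A S →
    ∃ v ∈ S, ∀ u ∈ S, ∀ p : List V, IsWalk G.A G.s u p → v ∈ p

/-- A digraph is acyclic if it has no cycle (a path from a vertex to itself
with at least one arc). -/
def Acyclic (A : V → V → Prop) : Prop :=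
  ¬ ∃ (v : V) (p : List V), IsWalk A v v p ∧ 2 ≤ p.length

/-- `IsHighWalk A ν u v p`: `p` is a high path from `u` to `v`: a path all of
whose vertices other than `u` and `v` are greater (in the numbering `ν`) than
both `u` and `v`. -/
def IsHighWalk (A : V → V → Prop) (ν : V → ℕ) (u v : V) (p : List V) : Prop :=
  IsWalk A u v p ∧ ∀ x ∈ p, x ≠ u → x ≠ v → ν u < ν x ∧ ν v < ν x

theorem isWalk_snoc {A : V → V → Prop} {u v w : V} {p : List V} (h : IsWalk A u v p)
    (a : A v w) : IsWalk A u w (p ++ [w]) := by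
  obtain ⟨h1, h2, h3⟩ := h
  refine ⟨?_, ?_, ?_⟩
  · refine List.isChain_append.2 ⟨h1, by simp, ?_⟩
    intro x hx y hy
    rw [h3] at hx
    simp at hx hy
    subst hx; subst hy; exact a
  · simp [h2]
  · simp

theorem isWalk_inv {A : V → V → Prop} {u v : V} {p : List V} (h : IsWalk A u v p) :
    (p = [v] ∧ u = v) ∨ ∃ v' p', IsWalk A u v' p' ∧ A v' v ∧ p = p' ++ [v] := by
  obtain ⟨h1, h2, h3⟩ := h
  rcases List.eq_nil_or_concat p with rfl | ⟨q, w, rfl⟩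
  · simp at h3
  · simp at h3
    subst h3
    rcases List.eq_nil_or_concat q with rfl | ⟨q', w', rfl⟩
    · left; simp at h2 ⊢; exact h2.symm
    · right
      rw [List.concat_eq_append, List.concat_eq_append] at h1
      obtain ⟨c1, _, c3⟩ := List.isChain_append.1 h1
      refine ⟨w', q' ++ [w'], ⟨c1, ?_, by simp⟩, ?_, by simp⟩
      · simpa using h2
      · exact c3 w' (by simp) w (by simp)

theorem isWalk_mem {A : V → V → Prop} (M : V → V → Prop) (hM : ∀ a c, A a c → M a c)
    (hT : ∀ a c d, M a c → M c d → M a d) {u : V} :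
    ∀ (n : ℕ) (v : V) (p : List V), p.length = n → IsWalk A u v p →
      ∀ x ∈ p, x = v ∨ M x v := by
  intro n
  induction n with
  | zero =>
    intro v p hp h x hx
    rw [List.length_eq_zero_iff.1 hp] at hx
    simp at hx
  | succ n ih =>
    intro v p hp h x hx
    rcases isWalk_inv h with ⟨rfl, _⟩ | ⟨v', p', h', a, rfl⟩
    · left; simpa using hx
    · rcases List.mem_append.1 hx with hx | hx
      · right
        rcases ih v' p' (by simpa using hp) h' x hx with rfl | hm
        · exact hM _ _ a
        · exact hT _ _ _ hm (hM _ _ a)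
      · left; simpa using hx

theorem anc_trans {T : ParentTree V} {a b c : V} (h : T.Anc a b) (h' : T.Anc b c) :
    T.Anc a c := by
  obtain ⟨n, rfl⟩ := h
  obtain ⟨m, rfl⟩ := h'
  exact ⟨n + m, Function.iterate_add_apply _ _ _ _⟩

theorem anc_root {T : ParentTree V} {x : V} (h : T.Anc x T.root) : x = T.root := by
  obtain ⟨n, rfl⟩ := h
  exact Function.iterate_fixed T.parent_root n

theorem anc_dom {G : FlowGraph V} {T : ParentTree V} (hroot : T.root = G.s)
    (hpp : ParentProperty G T) : ∀ (n : ℕ) (v : V) (p : List V), p.length = n →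
      IsWalk G.A G.s v p → ∀ x, T.Anc x v → x ∈ p := by
  intro n
  induction n with
  | zero =>
    intro v p hp h x hx
    rw [List.length_eq_zero_iff.1 hp] at h
    simpa using h.2.1
  | succ n ih =>
    intro v p hp h x hx
    rcases isWalk_inv h with ⟨rfl, e⟩ | ⟨v', p', h', a, rfl⟩
    · rw [← e, ← hroot] at hx
      rw [anc_root hx, hroot, e]; simp
    · obtain ⟨k, hk⟩ := hx
      cases k with
      | zero => simp at hk; simp [hk]
      | succ k =>
        have : T.Anc x (T.parent v) := ⟨k, hk⟩
        exact List.mem_append_left _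
          (ih v' p' (by simpa using hp) h' x (anc_trans this (hpp _ _ a)))

theorem parent_ne {T : ParentTree V} {v : V} (h : v ≠ T.root) : T.parent v ≠ v := by
  intro e
  obtain ⟨n, hn⟩ := T.reaches_root v
  rw [Function.iterate_fixed e n] at hn
  exact h hn

/-- The strict order along which the arcs of `R` (reversed) increase. -/
def RLt (T : ParentTree V) (ord : V → ℕ) (a b : V) : Prop :=
  (T.Anc b a ∧ b ≠ a) ∨ (ord a < ord b ∧ ¬ T.Anc a b)

theorem anc_antisymm {T : ParentTree V} {ord : V → ℕ} (h : IsTreePreorder T ord) {a b : V}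
    (h1 : T.Anc a b) (h2 : T.Anc b a) : a = b :=
  h.1 (le_antisymm (h.2.1 _ _ h1) (h.2.1 _ _ h2))

theorem anc_refl (T : ParentTree V) (a : V) : T.Anc a a := ⟨0, rfl⟩

theorem rlt_trans {T : ParentTree V} {ord : V → ℕ} (h : IsTreePreorder T ord) {a b c : V}
    (h1 : RLt T ord a b) (h2 : RLt T ord b c) : RLt T ord a c := by
  rcases h1 with ⟨h1, n1⟩ | ⟨h1, n1⟩ <;> rcases h2 with ⟨h2, n2⟩ | ⟨h2, n2⟩
  · left
    refine ⟨anc_trans h2 h1, ?_⟩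
    rintro rfl
    exact n1 (anc_antisymm h h1 h2)
  · right
    refine ⟨?_, fun k => n2 (anc_trans h1 k)⟩
    by_contra hc
    exact n2 (h.2.2 b b c a (anc_refl T b) h1 h2.le (not_lt.1 hc))
  · by_cases hc : ord c ≤ ord a
    · left
      refine ⟨h.2.2 c c a b (anc_refl T c) h2 hc h1.le, ?_⟩
      rintro rfl
      exact n1 h2
    · right
      exact ⟨not_le.1 hc, fun k => n1 (anc_trans k h2)⟩
  · right
    exact ⟨h1.trans h2, fun k => n1 (h.2.2 a a b c (anc_refl T a) k h1.le h2.le)⟩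

theorem rlt_irrefl {T : ParentTree V} {ord : V → ℕ} (a : V) : ¬ RLt T ord a a := by
  rintro (⟨_, h⟩ | ⟨h, _⟩)
  · exact h rfl
  · exact lt_irrefl _ h

theorem spanning_of_wf (G : FlowGraph V) (f : V → V) (M : V → V → Prop) (wf : WellFounded M)
    (hA : ∀ v, v ≠ G.s → G.A (f v) v) (hM : ∀ v, v ≠ G.s → M (f v) v) :
    IsSpanningTree G (fun a c => c ≠ G.s ∧ f c = a) := by
  refine ⟨?_, ?_, ?_, ?_⟩
  · rintro u v ⟨h, rfl⟩
    exact hA v h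
  · rintro v ⟨h, _⟩
    exact h rfl
  · intro v hv
    exact ⟨f v, ⟨hv, rfl⟩, fun y hy => hy.2.symm⟩
  · intro v
    induction v using wf.induction with
    | _ v ih =>
      by_cases hv : v = G.s
      · subst hv
        exact ⟨[G.s], List.isChain_singleton _, rfl, rfl⟩
      · obtain ⟨p, hp⟩ := ih (f v) (hM v hv)
        exact ⟨_, isWalk_snoc hp ⟨hv, rfl⟩⟩

/-- Given a tree `T` with the parent property and a low-high order, and
functions `b`, `r` choosing for each `v ≠ s` arcs `(b(v), v)` and `(r(v), v)`
of `G` with `b(v) < v`, and with `r(v) = t(v)` or `r(v) > v` not a descendant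
of `v`, the graphs `B` and `R` with arc sets `{(b(v), v)}` and `{(r(v), v)}`
are strongly independent spanning trees of `G` rooted at `s`. -/
theorem stmt6 [Fintype V] (G : FlowGraph V) (T : ParentTree V)
    (hroot : T.root = G.s) (hpp : ParentProperty G T)
    (ord : V → ℕ) (hlh : LowHigh G T ord)
    (b r : V → V)
    (hb : ∀ v : V, v ≠ G.s → G.A (b v) v ∧ ord (b v) < ord v)
    (hr : ∀ v : V, v ≠ G.s → G.A (r v) v ∧
      (r v = T.parent v ∨ (ord v < ord (r v) ∧ ¬ T.Anc v (r v)))) :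
    IsSpanningTree G (fun a c => c ≠ G.s ∧ b c = a) ∧
    IsSpanningTree G (fun a c => c ≠ G.s ∧ r c = a) ∧
    StronglyIndependent G (fun a c => c ≠ G.s ∧ b c = a)
      (fun a c => c ≠ G.s ∧ r c = a) := by
  classical
  have hpre : IsTreePreorder T ord := hlh.1
  have hrM : ∀ v, v ≠ G.s → RLt T ord v (r v) := by
    intro v hv
    rcases (hr v hv).2 with h | h
    · left
      rw [h]
      exact ⟨⟨1, rfl⟩, parent_ne (hroot ▸ hv)⟩
    · exact Or.inr h
  have key : ∀ v w, ord v ≤ ord w → ∀ p q : List V,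
      IsWalk (fun a c => c ≠ G.s ∧ b c = a) G.s v p →
      IsWalk (fun a c => c ≠ G.s ∧ r c = a) G.s w q →
      ∀ x : V, x ∈ p → x ∈ q → G.Dom x v ∧ G.Dom x w := by
    intro v w hvw p q hp hq x hxp hxq
    have h1 : ord x ≤ ord v := by
      rcases isWalk_mem (fun a c => ord a < ord c)
        (by rintro a c ⟨h, rfl⟩; exact (hb c h).2)
        (fun a c d h h' => lt_trans h h') _ v p rfl hp x hxp with rfl | h
      · exact le_rfl
      · exact le_of_lt h
    have h2 : T.Anc x w := by
      rcases isWalk_mem (fun a c => RLt T ord c a)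
        (by rintro a c ⟨h, rfl⟩; exact hrM c h)
        (fun a c d h h' => rlt_trans hpre h' h) _ w q rfl hq x hxq with rfl | h
      · exact anc_refl T x
      · rcases h with h | h
        · exact h.1
        · omega
    have h3 : T.Anc x v := hpre.2.2 x x v w (anc_refl T x) h2 h1 hvw
    exact ⟨fun p hp => anc_dom hroot hpp _ v p rfl hp x h3,
      fun p hp => anc_dom hroot hpp _ w p rfl hp x h2⟩
  refine ⟨?_, ?_, ?_⟩
  · exact spanning_of_wf G b (fun a c => ord a < ord c) (measure ord).wf
      (fun v hv => (hb v hv).1) (fun v hv => (hb v hv).2)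
  · have wf : WellFounded (fun a c => RLt T ord c a) := by
      have : IsTrans V (fun a c => RLt T ord c a) := ⟨fun a c d h h' => rlt_trans hpre h' h⟩
      have : Std.Irrefl (fun a c => RLt T ord c a) := ⟨fun a => rlt_irrefl a⟩
      exact Finite.wellFounded_of_trans_of_irrefl _
    exact spanning_of_wf G r _ wf (fun v hv => (hr v hv).1) hrM
  · intro v w
    rcases le_total (ord v) (ord w) with h | h
    · exact Or.inl (key v w h)
    · right
      intro p q hp hq x hxp hxq
      exact (key w v h q p hq hp x hxq hxp).symm
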